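/- The infinite series ∑_{n=1}^{∞} 1/(n²(4n−1)) converges to (72·ln 2 − 12π − π²)/6. -/

import Mathlib

/-!
Partial fractions give `1 / (n² (4n - 1)) = 4 (4 / (4n - 1) - 1 / n) - 1 / n²`. The numbers
`4n - 1` are the odd numbers carrying a minus sign in Leibniz' series `1 - 1/3 + 1/5 - ⋯`, so
`∑_{n ≤ N} 4 / (4n - 1)` is twice the difference between the sum of all odd reciprocals up to
`4N - 1`, which is `H_{4N} - H_{2N} / 2`, and the first `2N` terms of Leibniz' series. This writes
the `N`-th partial sum as `4 (2 H_{4N} - H_{2N} - H_N - 2 L_{2N}) - ∑_{n ≤ N} 1 / n²`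
(`partial_sum_eq`). Since `H_m - log m` converges, the harmonic part tends to `3 log 2`
(`tendsto_harmonic_comb`); moreover `L_{2N} → π / 4` and `∑ 1 / n² = π² / 6`.
-/

open Real Filter Topology

theorem partial_sum_eq (N : ℕ) :
    ∑ n ∈ Finset.range N, 1 / (((n:ℝ)+1)^2 * (4*((n:ℝ)+1)-1)) =
      4 * ((2 * (harmonic (4 * N) : ℝ) - (harmonic (2 * N) : ℝ) - (harmonic N : ℝ))
        - 2 * ∑ i ∈ Finset.range (2 * N), (-1 : ℝ) ^ i / (2 * i + 1))
      - ∑ n ∈ Finset.range N, 1 / ((n:ℝ)+1)^2 := by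
  induction N with
  | zero => simp
  | succ N ih =>
    rw [Finset.sum_range_succ, ih, Finset.sum_range_succ _ N,
      show 4 * (N + 1) = 4 * N + 1 + 1 + 1 + 1 by ring,
      show 2 * (N + 1) = 2 * N + 1 + 1 by ring]
    simp only [harmonic_succ, Finset.sum_range_succ, pow_succ, pow_mul]
    push_cast
    have h0 : (N : ℝ) + 1 ≠ 0 := by positivity
    have h1 : 4 * (N : ℝ) + 1 ≠ 0 := by positivity
    have h2 : 2 * (N : ℝ) + 1 ≠ 0 := by positivity
    have h3 : 4 * (N : ℝ) + 3 ≠ 0 := by positivity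
    rw [show 4 * ((N : ℝ) + 1) - 1 = 4 * N + 3 by ring,
      show 4 * (N : ℝ) + 1 + 1 = 2 * (2 * N + 1) by ring,
      show 2 * (2 * (N : ℝ) + 1) + 1 = 4 * N + 3 by ring,
      show 4 * (N : ℝ) + 3 + 1 = 4 * (N + 1) by ring,
      show 2 * (N : ℝ) + 1 + 1 = 2 * (N + 1) by ring,
      show 2 * (2 * (N : ℝ)) + 1 = 4 * N + 1 by ring]
    norm_num
    field_simp
    ring

/-- The Euler–Mascheroni constants cancel because the coefficients `2, -1, -1` sum to zero;
what remains is `2 log (4N) - log (2N) - log N = 3 log 2`. -/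
theorem tendsto_harmonic_comb :
    Tendsto (fun N : ℕ => 2 * (harmonic (4 * N) : ℝ) - (harmonic (2 * N) : ℝ) - (harmonic N : ℝ))
      atTop (𝓝 (3 * Real.log 2)) := by
  have h := Real.tendsto_harmonic_sub_log
  have h4 := h.comp (tendsto_id.const_mul_atTop' (show 0 < 4 by norm_num))
  have h2 := h.comp (tendsto_id.const_mul_atTop' (show 0 < 2 by norm_num))
  have key := (((h4.const_mul 2).sub h2).sub h).add_const (3 * Real.log 2)
  rw [show 2 * eulerMascheroniConstant - eulerMascheroniConstant - eulerMascheroniConstant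
    + 3 * Real.log 2 = 3 * Real.log 2 by ring] at key
  refine key.congr' ?_
  filter_upwards [eventually_gt_atTop 0] with N hN
  have hN' : (N : ℝ) ≠ 0 := by positivity
  simp only [Function.comp_apply, id_eq]
  push_cast
  rw [Real.log_mul (by norm_num) hN', Real.log_mul (by norm_num) hN',
    show (4 : ℝ) = 2 ^ 2 by norm_num, Real.log_pow]
  push_cast
  ring

theorem stmt_11 :
    HasSum (fun n : ℕ => 1 / (((n:ℝ)+1)^2 * (4*((n:ℝ)+1)-1))) ((72 * Real.log 2 - 12 * π - π^2) / 6) := by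
  rw [hasSum_iff_tendsto_nat_of_nonneg]
  · simp only [partial_sum_eq]
    have hL := Real.tendsto_sum_pi_div_four.comp
      (tendsto_id.const_mul_atTop' (show 0 < 2 by norm_num))
    have hz : HasSum (fun n : ℕ => 1 / ((n:ℝ)+1)^2) (π ^ 2 / 6) := by
      have := (hasSum_nat_add_iff' 1).mpr hasSum_zeta_two
      simpa using this
    have key := ((tendsto_harmonic_comb.sub (hL.const_mul 2)).const_mul 4).sub
      hz.tendsto_sum_nat
    simp only [Function.comp_apply, id_eq] at key
    rwa [show 4 * (3 * Real.log 2 - 2 * (π / 4)) - π ^ 2 / 6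
      = (72 * Real.log 2 - 12 * π - π ^ 2) / 6 by ring] at key
  · intro n
    have : (0 : ℝ) ≤ 4 * ((n : ℝ) + 1) - 1 := by
      have : (0 : ℝ) ≤ n := n.cast_nonneg
      linarith
    positivity
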